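/- arXiv:2209.02803 — 3 statements merged into one kernel-verified Lean document; each statement's English description precedes it below -/
import Mathlib

section
/- For every integer n ≥ 2, the geometric realization of the perfect matching complex M_p(H_{1×1×n}) of the honeycomb graph H_{1×1×n} (a line of n hexagons) is contractible. -/
/-!
The line of `n` hexagons is a ladder: two paths joined by `n + 1` rungs. A perfect matching
contains exactly one rung, and the rung determines it, so the complex has `n + 1` facets
`M_0, …, M_n`, indexed by the height of the rung. All facets except `M_0` contain the lowest edge
`y = leftB 0` of the left path, and all except `M_n` contain the highest edge `x = rightB (n - 1)`
of the right path, while `M_0` and `M_n` are disjoint. Hence the simplicial map sending the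
vertices of `M_0` to `x` and all other vertices to `y` carries each facet `M` to a subset of `M`,
so it is joined to the identity by a straight-line homotopy. For `n ≥ 2` the facet `M_1` contains
both `x` and `y`, so the image of this map lies in one simplex and contracts to a point
(`contractible_of_two_vertices`).

The full list of facets is not needed: forcing along the ladder shows that a perfect matching
missing `y` lies in `M_0` (`subset_bottomMatching`) and that one missing `x` is disjoint from
`M_0` (`disjoint_bottomMatching`); that `M_1` is a perfect matching is
`secondMatching_isPerfect`.
-/

open Finset

/-- Ambient vertex type for honeycomb graphs: white (`Sum.inl`) and black (`Sum.inr`)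
vertices of the hexagonal lattice, indexed by `ℤ × ℤ`.  In the full hexagonal lattice,
the white vertex `Wv p q` is adjacent to the black vertices `Bv p q`, `Bv (p-1) q`
and `Bv p (q-1)`. -/
abbrev HoneyV : Type := (ℤ × ℤ) ⊕ (ℤ × ℤ)

/-- A white vertex of the hexagonal lattice. -/
def Wv (p q : ℤ) : HoneyV := Sum.inl (p, q)

/-- A black vertex of the hexagonal lattice. -/
def Bv (p q : ℤ) : HoneyV := Sum.inr (p, q)

/-- The edge `a_{i,j}` of the honeycomb graph `H_{1×m×n}`: the top edge of the
hexagon `T_{i,j}` (equivalently, the bottom edge of `T_{i,j+1}`). -/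
def edgeA (n i j : ℤ) : Sym2 HoneyV := s(Wv (i+1) (n-j), Bv i (n-j))

/-- The edge `b_{i,j}` of the honeycomb graph `H_{1×m×n}`: the lower-right edge of the
hexagon `T_{i,j}` (equivalently, the upper-left edge of `T_{i+1,j}`). -/
def edgeB (n i j : ℤ) : Sym2 HoneyV := s(Wv (i+1) (n-j+1), Bv (i+1) (n-j))

/-- The edge `d_{i,j}` of the honeycomb graph `H_{1×m×n}`: the upper-right edge of the
hexagon `T_{i,j}` (equivalently, the lower-left edge of `T_{i+1,j+1}`). -/
def edgeD (n i j : ℤ) : Sym2 HoneyV := s(Wv (i+1) (n-j), Bv (i+1) (n-j))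

/-- The edge set of the honeycomb graph `H_{1×m×n}`: the edges `a_{i,j}`
(`1 ≤ i ≤ m`, `0 ≤ j ≤ n`), `b_{i,j}` (`0 ≤ i ≤ m`, `1 ≤ j ≤ n`) and `d_{i,j}`
(`0 ≤ i ≤ m`, `0 ≤ j ≤ n`, excluding `d_{0,n}` and `d_{m,0}`). -/
def honeyEdges (m n : ℤ) : Set (Sym2 HoneyV) :=
  {e | (∃ i j : ℤ, 1 ≤ i ∧ i ≤ m ∧ 0 ≤ j ∧ j ≤ n ∧ e = edgeA n i j) ∨
       (∃ i j : ℤ, 0 ≤ i ∧ i ≤ m ∧ 1 ≤ j ∧ j ≤ n ∧ e = edgeB n i j) ∨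
       (∃ i j : ℤ, 0 ≤ i ∧ i ≤ m ∧ 0 ≤ j ∧ j ≤ n ∧ ¬(i = 0 ∧ j = n) ∧
          ¬(i = m ∧ j = 0) ∧ e = edgeD n i j)}

/-- The honeycomb graph `H_{1×m×n}`. -/
def honeyGraph (m n : ℤ) : SimpleGraph HoneyV := SimpleGraph.fromEdgeSet (honeyEdges m n)

/-- `M` is a matching of the graph `G`: a set of edges of `G`, no two of which share
a vertex. -/
def IsMatchingSet {V : Type*} (G : SimpleGraph V) (M : Set (Sym2 V)) : Prop :=
  M ⊆ G.edgeSet ∧ ∀ e ∈ M, ∀ f ∈ M, e ≠ f → ∀ v : V, v ∈ e → v ∉ f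

/-- `M` is a perfect matching of the graph `G`: a matching covering every
(non-isolated) vertex of `G`. -/
def IsPerfectMatchingSet {V : Type*} (G : SimpleGraph V) (M : Set (Sym2 V)) : Prop :=
  IsMatchingSet G M ∧ ∀ v ∈ G.support, ∃ e ∈ M, v ∈ e

/-- The faces of the perfect matching complex `M_p(G)`: the finite sets of edges of `G`
contained in some perfect matching of `G`. -/
def pmFaces {V : Type*} (G : SimpleGraph V) : Set (Finset (Sym2 V)) :=
  {s | ∃ M, IsPerfectMatchingSet G M ∧ (s : Set (Sym2 V)) ⊆ M}

/-- The geometric realization of the abstract simplicial complex with face set `K`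
on the vertex set `E`: the space of barycentric-coordinate functions supported on a
face of `K`, topologized as a subspace of the product `E → ℝ`. -/
abbrev GeomRealization {E : Type*} (K : Set (Finset E)) : Type _ :=
  {f : E → ℝ // (∀ x, 0 ≤ f x) ∧ ∃ s ∈ K, (∀ x, f x ≠ 0 → x ∈ s) ∧ ∑ x ∈ s, f x = 1}

/-! ### Straight-line contractions of geometric realizations -/

section Realization

variable {E : Type*}

lemma sum_eq_sum_of_support {f : E → ℝ} {s t : Finset E}
    (hs : ∀ x, f x ≠ 0 → x ∈ s) (ht : ∀ x, f x ≠ 0 → x ∈ t) :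
    ∑ x ∈ s, f x = ∑ x ∈ t, f x := by
  rw [← finsum_eq_sum_of_support_subset f (s := s) (fun x hx => hs x hx),
    ← finsum_eq_sum_of_support_subset f (s := t) (fun x hx => ht x hx)]

/-- Two continuous self-maps of a realization are homotopic along straight segments as soon as,
at every point, their values are carried by a common face. -/
lemma homotopic_of_common_face {K : Set (Finset E)}
    (u v : C(GeomRealization K, GeomRealization K))
    (h : ∀ f, ∃ s ∈ K, (∀ x, (u f).1 x ≠ 0 → x ∈ s) ∧ (∀ x, (v f).1 x ≠ 0 → x ∈ s)) :
    u.Homotopic v := by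
  refine ⟨⟨⟨fun p => ⟨fun x => (1 - (p.1 : ℝ)) * (u p.2).1 x + (p.1 : ℝ) * (v p.2).1 x,
    ?_, ?_⟩, ?_⟩, ?_, ?_⟩⟩
  · intro x
    have h0 := p.1.2.1
    have h1 := p.1.2.2
    have := mul_nonneg (sub_nonneg.2 h1) ((u p.2).2.1 x)
    have := mul_nonneg h0 ((v p.2).2.1 x)
    linarith
  · obtain ⟨s, hs, hu, hv⟩ := h p.2
    obtain ⟨-, a, -, ha, ha1⟩ := (u p.2).2
    obtain ⟨-, b, -, hb, hb1⟩ := (v p.2).2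
    refine ⟨s, hs, fun x hx => ?_, ?_⟩
    · by_contra hxs
      have h1 : (u p.2).1 x = 0 := by_contra fun h => hxs (hu x h)
      have h2 : (v p.2).1 x = 0 := by_contra fun h => hxs (hv x h)
      exact hx (by simp [h1, h2])
    · rw [Finset.sum_add_distrib, ← Finset.mul_sum, ← Finset.mul_sum,
        sum_eq_sum_of_support hu ha, sum_eq_sum_of_support hv hb, ha1, hb1]
      ring
  · refine Continuous.subtype_mk (continuous_pi fun x => ?_) _
    have hu : Continuous fun p : unitInterval × GeomRealization K => (u p.2).1 x :=
      (continuous_apply x).comp (continuous_subtype_val.comp (u.continuous.comp continuous_snd))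
    have hv : Continuous fun p : unitInterval × GeomRealization K => (v p.2).1 x :=
      (continuous_apply x).comp (continuous_subtype_val.comp (v.continuous.comp continuous_snd))
    have ht : Continuous fun p : unitInterval × GeomRealization K => (p.1 : ℝ) :=
      continuous_subtype_val.comp continuous_fst
    exact ((continuous_const.sub ht).mul hu).add (ht.mul hv)
  · intro f
    apply Subtype.ext
    funext x
    simp
  · intro f
    apply Subtype.ext
    funext x
    simp

open Classical in
/-- Contractibility criterion for the complex of finite subsets of members of a family `F`.
The simplicial map sending the vertices in `P` to `x` and the others to `y` is contiguous to the
identity by `hP` and `hQ`, and its image lies in the single face `{x, y}`. -/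
lemma contractible_of_two_vertices (F : Set (Set E)) (P : Finset E) (x y : E)
    (hP : ∀ M ∈ F, ∀ z ∈ M, z ∈ P → x ∈ M)
    (hQ : ∀ M ∈ F, ∀ z ∈ M, z ∉ P → y ∈ M)
    (hxy : ∃ M ∈ F, x ∈ M ∧ y ∈ M) :
    ContractibleSpace
      (GeomRealization {s : Finset E | ∃ M, M ∈ F ∧ (s : Set E) ⊆ M}) := by
  set K : Set (Finset E) := {s : Finset E | ∃ M, M ∈ F ∧ (s : Set E) ⊆ M} with hK
  have hface : ({x, y} : Finset E) ∈ K := by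
    obtain ⟨M, hM, hx, hy⟩ := hxy
    refine ⟨M, hM, ?_⟩
    intro z hz
    simp only [Finset.coe_insert, Finset.coe_singleton, Set.mem_insert_iff,
      Set.mem_singleton_iff] at hz
    rcases hz with rfl | rfl <;> assumption
  -- The weight of `f` on `P`, split from its weight outside `P`.
  have hsplit : ∀ (f : E → ℝ) (s : Finset E), (∀ z, f z ≠ 0 → z ∈ s) → ∑ z ∈ s, f z = 1 →
      1 - ∑ z ∈ P, f z = ∑ z ∈ s with z ∉ P, f z := by
    intro f s hs h1
    have h2 : ∑ z ∈ P, f z = ∑ z ∈ s with z ∈ P, f z := by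
      symm
      rw [← Finset.sum_filter_ne_zero P]
      rw [← Finset.sum_filter_ne_zero (s.filter _)]
      congr 1
      ext z
      simp only [Finset.mem_filter]
      exact ⟨fun h => ⟨h.1.2, h.2⟩, fun h => ⟨⟨hs z h.2, h.1⟩, h.2⟩⟩
    have h3 := Finset.sum_filter_add_sum_filter_not s (fun z => z ∈ P) f
    linarith
  let l : GeomRealization K → ℝ := fun f => ∑ z ∈ P, f.1 z
  have hl0 : ∀ f, 0 ≤ l f := fun f => Finset.sum_nonneg fun z _ => f.2.1 z
  have hl1 : ∀ f, 0 ≤ 1 - l f := by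
    intro f
    obtain ⟨h0, s, -, hs, h1⟩ := f.2
    rw [hsplit f.1 s hs h1]
    exact Finset.sum_nonneg fun z _ => h0 z
  have hlc : Continuous l :=
    continuous_finsetSum _ fun z _ => (continuous_apply z).comp continuous_subtype_val
  have hpt : ∀ c : ℝ, 0 ≤ c → 0 ≤ 1 - c →
      (∀ z, 0 ≤ c * (Pi.single x 1 : E → ℝ) z + (1 - c) * (Pi.single y 1 : E → ℝ) z) ∧
      ∃ s ∈ K, (∀ z, c * (Pi.single x 1 : E → ℝ) z + (1 - c) * (Pi.single y 1 : E → ℝ) z ≠ 0 →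
        z ∈ s) ∧
        ∑ z ∈ s, (c * (Pi.single x 1 : E → ℝ) z + (1 - c) * (Pi.single y 1 : E → ℝ) z) = 1 := by
    intro c h0 h1
    refine ⟨fun z => ?_, {x, y}, hface, fun z hz => ?_, ?_⟩
    · have : 0 ≤ (Pi.single x 1 : E → ℝ) z := by
        rw [Pi.single_apply]; split_ifs <;> norm_num
      have : 0 ≤ (Pi.single y 1 : E → ℝ) z := by
        rw [Pi.single_apply]; split_ifs <;> norm_num
      positivity
    · by_contra h
      simp only [Finset.mem_insert, Finset.mem_singleton, not_or] at h
      simp [Pi.single_apply, h.1, h.2] at hz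
    · rw [Finset.sum_add_distrib, ← Finset.mul_sum, ← Finset.mul_sum]
      simp [Pi.single_apply]
  let g : C(GeomRealization K, GeomRealization K) :=
    ⟨fun f => ⟨fun z => l f * (Pi.single x 1 : E → ℝ) z + (1 - l f) * (Pi.single y 1 : E → ℝ) z,
      hpt (l f) (hl0 f) (hl1 f)⟩, by
      refine Continuous.subtype_mk (continuous_pi fun z => ?_) _
      exact (hlc.mul continuous_const).add ((continuous_const.sub hlc).mul continuous_const)⟩
  let p : GeomRealization K := ⟨_, hpt 1 (by norm_num) (by norm_num)⟩
  have hg : ∀ f z, (g f).1 z ≠ 0 → (z = x ∧ l f ≠ 0) ∨ (z = y ∧ 1 - l f ≠ 0) := by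
    intro f z hz
    by_contra! h
    apply hz
    change l f * (Pi.single x 1 : E → ℝ) z + (1 - l f) * (Pi.single y 1 : E → ℝ) z = 0
    simp only [Pi.single_apply]
    by_cases hx : z = x <;> by_cases hy : z = y <;> simp_all
  rw [contractible_iff_id_nullhomotopic]
  refine ⟨p, ContinuousMap.Homotopic.trans (g := g) ?_ ?_⟩
  · apply homotopic_of_common_face
    intro f
    obtain ⟨h0, s, ⟨M, hM, hsM⟩, hs, h1⟩ := f.2
    refine ⟨(insert x (insert y s)).filter (· ∈ M), ⟨M, hM, ?_⟩, fun z hz => ?_, fun z hz => ?_⟩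
    · intro z hz
      simpa using (Finset.mem_filter.1 (Finset.mem_coe.1 hz)).2
    · have := hs z hz
      simp [this, hsM (Finset.mem_coe.2 this)]
    · rcases hg f z hz with ⟨rfl, h⟩ | ⟨rfl, h⟩
      · obtain ⟨w, hw, hw0⟩ := Finset.exists_ne_zero_of_sum_ne_zero h
        simp [hP M hM w (hsM (hs w hw0)) hw]
      · change 1 - ∑ z ∈ P, f.1 z ≠ 0 at h
        rw [hsplit f.1 s hs h1] at h
        obtain ⟨w, hw, hw0⟩ := Finset.exists_ne_zero_of_sum_ne_zero h
        simp [hQ M hM w (hsM (hs w hw0)) (Finset.mem_filter.1 hw).2]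
  · apply homotopic_of_common_face
    intro f
    refine ⟨{x, y}, hface, fun z hz => ?_, fun z hz => ?_⟩
    · rcases hg f z hz with ⟨rfl, h⟩ | ⟨rfl, h⟩ <;> simp
    · by_contra h
      simp only [Finset.mem_insert, Finset.mem_singleton, not_or] at h
      apply hz
      change 1 * (Pi.single x 1 : E → ℝ) z + (1 - 1) * (Pi.single y 1 : E → ℝ) z = 0
      simp [Pi.single_apply, h.1]

end Realization

/-! ### The line of hexagons as a ladder -/

/-- The rung at height `q` of the ladder, for `0 ≤ q ≤ n`; it equals `a_{1,n-q}`. -/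
def rung (q : ℤ) : Sym2 HoneyV := s(Wv 2 q, Bv 1 q)

/-- The left-path edge `b_{0,n-q}` leaving `Bv 1 q` upwards, for `0 ≤ q < n`. -/
def leftB (q : ℤ) : Sym2 HoneyV := s(Wv 1 (q + 1), Bv 1 q)

/-- The left-path edge `d_{0,n-q}` reaching `Bv 1 q` from below, for `1 ≤ q ≤ n`. -/
def leftD (q : ℤ) : Sym2 HoneyV := s(Wv 1 q, Bv 1 q)

/-- The right-path edge `b_{1,n-q}` leaving `Bv 2 q` upwards, for `0 ≤ q < n`. -/
def rightB (q : ℤ) : Sym2 HoneyV := s(Wv 2 (q + 1), Bv 2 q)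

/-- The right-path edge `d_{1,n-q}` reaching `Bv 2 q` from below, for `0 ≤ q < n`. -/
def rightD (q : ℤ) : Sym2 HoneyV := s(Wv 2 q, Bv 2 q)

lemma mem_honeyEdges_one (n : ℤ) (e : Sym2 HoneyV) :
    e ∈ honeyEdges 1 n ↔
      (∃ q, 0 ≤ q ∧ q ≤ n ∧ e = rung q) ∨ (∃ q, 0 ≤ q ∧ q < n ∧ e = leftB q) ∨
      (∃ q, 1 ≤ q ∧ q ≤ n ∧ e = leftD q) ∨ (∃ q, 0 ≤ q ∧ q < n ∧ e = rightB q) ∨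
      (∃ q, 0 ≤ q ∧ q < n ∧ e = rightD q) := by
  constructor
  · rintro (⟨i, j, hi, hi', hj, hj', rfl⟩ | ⟨i, j, hi, hi', hj, hj', rfl⟩ |
      ⟨i, j, hi, hi', hj, hj', h1, h2, rfl⟩)
    · obtain rfl : i = 1 := by omega
      exact Or.inl ⟨n - j, by omega, by omega, rfl⟩
    · obtain rfl | rfl : i = 0 ∨ i = 1 := by omega
      · exact Or.inr (Or.inl ⟨n - j, by omega, by omega, rfl⟩)
      · exact Or.inr (Or.inr (Or.inr (Or.inl ⟨n - j, by omega, by omega, rfl⟩)))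
    · obtain rfl | rfl : i = 0 ∨ i = 1 := by omega
      · exact Or.inr (Or.inr (Or.inl ⟨n - j, by omega, by omega, rfl⟩))
      · exact Or.inr (Or.inr (Or.inr (Or.inr ⟨n - j, by omega, by omega, rfl⟩)))
  · rintro (⟨q, h, h', rfl⟩ | ⟨q, h, h', rfl⟩ | ⟨q, h, h', rfl⟩ | ⟨q, h, h', rfl⟩ | ⟨q, h, h', rfl⟩)
    · exact Or.inl ⟨1, n - q, by omega, by omega, by omega, by omega, by simp [rung, edgeA]⟩
    · exact Or.inr (Or.inl ⟨0, n - q, by omega, by omega, by omega, by omega,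
        by simp [leftB, edgeB]⟩)
    · exact Or.inr (Or.inr ⟨0, n - q, by omega, by omega, by omega, by omega, by omega, by omega,
        by simp [leftD, edgeD]⟩)
    · exact Or.inr (Or.inl ⟨1, n - q, by omega, by omega, by omega, by omega,
        by simp [rightB, edgeB]⟩)
    · exact Or.inr (Or.inr ⟨1, n - q, by omega, by omega, by omega, by omega, by omega, by omega,
        by simp [rightD, edgeD]⟩)

lemma Wv_inj (p q p' q' : ℤ) : Wv p q = Wv p' q' ↔ p = p' ∧ q = q' := by simp [Wv]
lemma Bv_inj (p q p' q' : ℤ) : Bv p q = Bv p' q' ↔ p = p' ∧ q = q' := by simp [Bv]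
lemma Wv_ne_Bv (p q p' q' : ℤ) : Wv p q ≠ Bv p' q' := by simp [Wv, Bv]
lemma Bv_ne_Wv (p q p' q' : ℤ) : Bv p q ≠ Wv p' q' := by simp [Wv, Bv]

/-- Edges of the honeycomb graph join a white to a black vertex, so none of them is a loop and
`SimpleGraph.fromEdgeSet` discards nothing. -/
lemma mem_edgeSet (n : ℤ) (e : Sym2 HoneyV) :
    e ∈ (honeyGraph 1 n).edgeSet ↔ e ∈ honeyEdges 1 n := by
  simp only [honeyGraph, SimpleGraph.edgeSet_fromEdgeSet, Set.mem_sdiff, and_iff_left_iff_imp]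
  rw [mem_honeyEdges_one]
  rintro (⟨q, h, h', rfl⟩ | ⟨q, h, h', rfl⟩ | ⟨q, h, h', rfl⟩ | ⟨q, h, h', rfl⟩ | ⟨q, h, h', rfl⟩) <;>
    simp [rung, leftB, leftD, rightB, rightD, Wv_ne_Bv]

lemma mem_support_iff (n : ℤ) (v : HoneyV) :
    v ∈ (honeyGraph 1 n).support ↔ ∃ e ∈ honeyEdges 1 n, v ∈ e := by
  rw [SimpleGraph.mem_support]
  constructor
  · rintro ⟨w, hw⟩
    exact ⟨s(v, w), (mem_edgeSet n _).1 hw, by simp⟩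
  · rintro ⟨e, he, hv⟩
    obtain ⟨w, rfl⟩ := Sym2.mem_iff_exists.1 hv
    exact ⟨w, (mem_edgeSet n _).2 he⟩

lemma mem_rung (v : HoneyV) (q : ℤ) : v ∈ rung q ↔ v = Wv 2 q ∨ v = Bv 1 q := by simp [rung]
lemma mem_leftB (v : HoneyV) (q : ℤ) : v ∈ leftB q ↔ v = Wv 1 (q + 1) ∨ v = Bv 1 q := by
  simp [leftB]
lemma mem_leftD (v : HoneyV) (q : ℤ) : v ∈ leftD q ↔ v = Wv 1 q ∨ v = Bv 1 q := by simp [leftD]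
lemma mem_rightB (v : HoneyV) (q : ℤ) : v ∈ rightB q ↔ v = Wv 2 (q + 1) ∨ v = Bv 2 q := by
  simp [rightB]
lemma mem_rightD (v : HoneyV) (q : ℤ) : v ∈ rightD q ↔ v = Wv 2 q ∨ v = Bv 2 q := by simp [rightD]

/-! ### Perfect matchings of the ladder -/

section Matchings

variable {n : ℤ} {M : Set (Sym2 HoneyV)}

lemma IsPerfectMatchingSet.mem_edges (hM : IsPerfectMatchingSet (honeyGraph 1 n) M)
    {e : Sym2 HoneyV} (he : e ∈ M) : e ∈ honeyEdges 1 n :=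
  (mem_edgeSet n e).1 (hM.1.1 he)

lemma IsPerfectMatchingSet.eq_of_mem (hM : IsPerfectMatchingSet (honeyGraph 1 n) M)
    {e f : Sym2 HoneyV} (he : e ∈ M) (hf : f ∈ M) (v : HoneyV) (hve : v ∈ e) (hvf : v ∈ f) :
    e = f := by
  by_contra h
  exact hM.1.2 e he f hf h v hve hvf

/-- The edges available to cover `Wv 1 q`. -/
lemma cover_W1 (hM : IsPerfectMatchingSet (honeyGraph 1 n) M) {q : ℤ} (h : 1 ≤ q) (h' : q ≤ n) :
    leftB (q - 1) ∈ M ∨ leftD q ∈ M := by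
  obtain ⟨e, he, hv⟩ := hM.2 (Wv 1 q) ((mem_support_iff n _).2
    ⟨leftD q, (mem_honeyEdges_one n _).2 (Or.inr (Or.inr (Or.inl ⟨q, h, h', rfl⟩))),
      by simp [mem_leftD]⟩)
  rcases (mem_honeyEdges_one n e).1 (hM.mem_edges he) with
    ⟨r, h, h', rfl⟩ | ⟨r, h, h', rfl⟩ | ⟨r, h, h', rfl⟩ | ⟨r, h, h', rfl⟩ | ⟨r, h, h', rfl⟩ <;>
    simp [mem_rung, mem_leftB, mem_leftD, mem_rightB, mem_rightD, Wv_inj, Wv_ne_Bv] at hv <;>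
    subst hv <;> simp [he]

/-- The edges available to cover `Bv 2 q`. -/
lemma cover_B2 (hM : IsPerfectMatchingSet (honeyGraph 1 n) M) {q : ℤ} (h : 0 ≤ q) (h' : q < n) :
    rightB q ∈ M ∨ rightD q ∈ M := by
  obtain ⟨e, he, hv⟩ := hM.2 (Bv 2 q) ((mem_support_iff n _).2
    ⟨rightD q, (mem_honeyEdges_one n _).2 (Or.inr (Or.inr (Or.inr (Or.inr ⟨q, h, h', rfl⟩)))),
      by simp [mem_rightD]⟩)
  rcases (mem_honeyEdges_one n e).1 (hM.mem_edges he) with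
    ⟨r, h, h', rfl⟩ | ⟨r, h, h', rfl⟩ | ⟨r, h, h', rfl⟩ | ⟨r, h, h', rfl⟩ | ⟨r, h, h', rfl⟩ <;>
    simp [mem_rung, mem_leftB, mem_leftD, mem_rightB, mem_rightD, Bv_inj, Bv_ne_Wv] at hv <;>
    subst hv <;> simp [he]

/-- The bottom left vertex has degree two. -/
lemma cover_B1_zero (hn : 2 ≤ n) (hM : IsPerfectMatchingSet (honeyGraph 1 n) M) :
    leftB 0 ∈ M ∨ rung 0 ∈ M := by
  obtain ⟨e, he, hv⟩ := hM.2 (Bv 1 0) ((mem_support_iff n _).2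
    ⟨rung 0, (mem_honeyEdges_one n _).2 (Or.inl ⟨0, by omega, by omega, rfl⟩),
      by simp [mem_rung]⟩)
  rcases (mem_honeyEdges_one n e).1 (hM.mem_edges he) with
    ⟨r, h, h', rfl⟩ | ⟨r, h, h', rfl⟩ | ⟨r, h, h', rfl⟩ | ⟨r, h, h', rfl⟩ | ⟨r, h, h', rfl⟩ <;>
    simp [mem_rung, mem_leftB, mem_leftD, mem_rightB, mem_rightD, Bv_inj, Bv_ne_Wv] at hv <;>
    subst hv <;> first | omega | simp [he]

/-- The top right vertex has degree two. -/
lemma cover_W2_last (hn : 2 ≤ n) (hM : IsPerfectMatchingSet (honeyGraph 1 n) M) :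
    rightB (n - 1) ∈ M ∨ rung n ∈ M := by
  obtain ⟨e, he, hv⟩ := hM.2 (Wv 2 n) ((mem_support_iff n _).2
    ⟨rung n, (mem_honeyEdges_one n _).2 (Or.inl ⟨n, by omega, by omega, rfl⟩),
      by simp [mem_rung]⟩)
  rcases (mem_honeyEdges_one n e).1 (hM.mem_edges he) with
    ⟨r, h, h', rfl⟩ | ⟨r, h, h', rfl⟩ | ⟨r, h, h', rfl⟩ | ⟨r, h, h', rfl⟩ | ⟨r, h, h', rfl⟩ <;>
    simp [mem_rung, mem_leftB, mem_leftD, mem_rightB, mem_rightD, Wv_inj, Wv_ne_Bv] at hv <;>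
    subst hv <;> first | omega | simp [he]

lemma not_leftB_leftD (hM : IsPerfectMatchingSet (honeyGraph 1 n) M) {q : ℤ}
    (h : leftB q ∈ M) : leftD q ∉ M ∧ leftD (q + 1) ∉ M ∧ rung q ∉ M := by
  refine ⟨fun h' => ?_, fun h' => ?_, fun h' => ?_⟩
  · have := hM.eq_of_mem h h' (Bv 1 q) (by simp [mem_leftB]) (by simp [mem_leftD])
    simp [leftB, leftD, Wv_inj, Bv_inj, Wv_ne_Bv] at this
  · have := hM.eq_of_mem h h' (Wv 1 (q + 1)) (by simp [mem_leftB]) (by simp [mem_leftD])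
    simp [leftB, leftD, Wv_inj, Bv_inj, Wv_ne_Bv] at this
  · have := hM.eq_of_mem h h' (Bv 1 q) (by simp [mem_leftB]) (by simp [mem_rung])
    simp [leftB, rung, Wv_inj, Bv_inj, Wv_ne_Bv] at this

lemma not_rightB_rightD (hM : IsPerfectMatchingSet (honeyGraph 1 n) M) {q : ℤ}
    (h : rightB q ∈ M) : rightD q ∉ M ∧ rightD (q + 1) ∉ M ∧ rung (q + 1) ∉ M := by
  refine ⟨fun h' => ?_, fun h' => ?_, fun h' => ?_⟩
  · have := hM.eq_of_mem h h' (Bv 2 q) (by simp [mem_rightB]) (by simp [mem_rightD])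
    simp [rightB, rightD, Wv_inj, Bv_inj, Wv_ne_Bv] at this
  · have := hM.eq_of_mem h h' (Wv 2 (q + 1)) (by simp [mem_rightB]) (by simp [mem_rightD])
    simp [rightB, rightD, Wv_inj, Bv_inj, Wv_ne_Bv] at this
  · have := hM.eq_of_mem h h' (Wv 2 (q + 1)) (by simp [mem_rightB]) (by simp [mem_rung])
    simp [rightB, rung, Wv_inj, Bv_inj, Wv_ne_Bv] at this

lemma not_rung_D (hM : IsPerfectMatchingSet (honeyGraph 1 n) M) {q : ℤ}
    (h : rung q ∈ M) : leftD q ∉ M ∧ rightD q ∉ M := by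
  refine ⟨fun h' => ?_, fun h' => ?_⟩
  · have := hM.eq_of_mem h h' (Bv 1 q) (by simp [mem_rung]) (by simp [mem_leftD])
    simp [rung, leftD, Wv_inj, Bv_inj, Wv_ne_Bv] at this
  · have := hM.eq_of_mem h h' (Wv 2 q) (by simp [mem_rung]) (by simp [mem_rightD])
    simp [rung, rightD, Wv_inj, Bv_inj, Wv_ne_Bv] at this

/-- The perfect matching using the bottom rung. -/
noncomputable def bottomMatching (n : ℤ) : Finset (Sym2 HoneyV) :=
  {rung 0} ∪ (Finset.Icc 1 n).image leftD ∪ (Finset.Ico 0 n).image rightB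

/-- A perfect matching without `leftB 0` uses the bottom rung, which forces all its edges
upwards along both sides of the ladder. -/
lemma subset_bottomMatching (hn : 2 ≤ n) (hM : IsPerfectMatchingSet (honeyGraph 1 n) M)
    (h0 : leftB 0 ∉ M) : ∀ e ∈ M, e ∈ bottomMatching n := by
  have hr : rung 0 ∈ M := (cover_B1_zero hn hM).resolve_left h0
  have hD : ∀ q, 1 ≤ q → q ≤ n → leftD q ∈ M := by
    intro q hq
    induction q, hq using Int.leInduction with
    | base => exact fun h => (cover_W1 hM le_rfl h).resolve_left (by simpa using h0)
    | succ q hq ih =>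
      intro h
      refine (cover_W1 hM (by omega) h).resolve_left fun hb => ?_
      rw [add_sub_cancel_right] at hb
      exact (not_leftB_leftD hM hb).1 (ih (by omega))
  have hB : ∀ q, 0 ≤ q → q < n → rightB q ∈ M := by
    intro q hq
    induction q, hq using Int.leInduction with
    | base => exact fun h => (cover_B2 hM le_rfl h).resolve_right (not_rung_D hM hr).2
    | succ q hq ih =>
      exact fun h => (cover_B2 hM (by omega) h).resolve_right
        (not_rightB_rightD hM (ih (by omega))).2.1
  intro e he
  rcases (mem_honeyEdges_one n e).1 (hM.mem_edges he) with
    ⟨q, h, h', rfl⟩ | ⟨q, h, h', rfl⟩ | ⟨q, h, h', rfl⟩ | ⟨q, h, h', rfl⟩ | ⟨q, h, h', rfl⟩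
  · obtain rfl | hq : q = 0 ∨ 1 ≤ q := by omega
    · simp [bottomMatching]
    · exact absurd (hD q hq h') (not_rung_D hM he).1
  · exact absurd (hD (q + 1) (by omega) (by omega)) (not_leftB_leftD hM he).2.1
  · simp only [bottomMatching, Finset.mem_union, Finset.mem_image, Finset.mem_Icc]
    exact Or.inl (Or.inr ⟨q, ⟨h, h'⟩, rfl⟩)
  · simp only [bottomMatching, Finset.mem_union, Finset.mem_image, Finset.mem_Ico]
    exact Or.inr ⟨q, ⟨h, h'⟩, rfl⟩
  · exact absurd he (not_rightB_rightD hM (hB q h h')).1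

/-- A perfect matching without `rightB (n - 1)` uses the top rung, which forces all its edges
downwards; the resulting matching is disjoint from `bottomMatching n`. -/
lemma disjoint_bottomMatching (hn : 2 ≤ n) (hM : IsPerfectMatchingSet (honeyGraph 1 n) M)
    (h0 : rightB (n - 1) ∉ M) : ∀ e ∈ M, e ∉ bottomMatching n := by
  have hr : rung n ∈ M := (cover_W2_last hn hM).resolve_left h0
  have hD : ∀ q, q ≤ n - 1 → 0 ≤ q → rightD q ∈ M := by
    intro q hq
    induction q, hq using Int.leInductionDown with
    | base => exact fun h => (cover_B2 hM h (by omega)).resolve_left h0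
    | pred q hq ih =>
      intro h
      refine (cover_B2 hM h (by omega)).resolve_left fun hb => ?_
      have := (not_rightB_rightD hM hb).2.1
      rw [sub_add_cancel] at this
      exact this (ih (by omega))
  have hB : ∀ q, q ≤ n → 1 ≤ q → leftB (q - 1) ∈ M := by
    intro q hq
    induction q, hq using Int.leInductionDown with
    | base => exact fun h => (cover_W1 hM h le_rfl).resolve_right (not_rung_D hM hr).1
    | pred q hq ih =>
      exact fun h => (cover_W1 hM h (by omega)).resolve_right
        (not_leftB_leftD hM (ih (by omega))).1
  intro e he hb
  simp only [bottomMatching, Finset.mem_union, Finset.mem_singleton, Finset.mem_image,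
    Finset.mem_Icc, Finset.mem_Ico] at hb
  rcases hb with (rfl | ⟨q, ⟨h, h'⟩, rfl⟩) | ⟨q, ⟨h, h'⟩, rfl⟩
  · exact (not_rung_D hM he).2 (hD 0 (by omega) le_rfl)
  · have := (not_leftB_leftD hM (hB q h' h)).2.1
    rw [sub_add_cancel] at this
    exact this he
  · exact (not_rightB_rightD hM he).1 (hD q (by omega) h)

/-- The perfect matching using the rung at height `1`. -/
def secondMatching (n : ℤ) : Set (Sym2 HoneyV) :=
  {e | e = rung 1 ∨ e = leftB 0 ∨ e = rightD 0 ∨ (∃ q, 2 ≤ q ∧ q ≤ n ∧ e = leftD q) ∨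
    (∃ q, 1 ≤ q ∧ q < n ∧ e = rightB q)}

lemma secondMatching_isPerfect (hn : 2 ≤ n) :
    IsPerfectMatchingSet (honeyGraph 1 n) (secondMatching n) := by
  refine ⟨⟨fun e he => ?_, ?_⟩, ?_⟩
  · rw [mem_edgeSet, mem_honeyEdges_one]
    rcases he with rfl | rfl | rfl | ⟨q, h, h', rfl⟩ | ⟨q, h, h', rfl⟩
    · exact Or.inl ⟨1, by omega, by omega, rfl⟩
    · exact Or.inr (Or.inl ⟨0, by omega, by omega, rfl⟩)
    · exact Or.inr (Or.inr (Or.inr (Or.inr ⟨0, by omega, by omega, rfl⟩)))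
    · exact Or.inr (Or.inr (Or.inl ⟨q, by omega, by omega, rfl⟩))
    · exact Or.inr (Or.inr (Or.inr (Or.inl ⟨q, by omega, by omega, rfl⟩)))
  · rintro e he f hf hef v hve hvf
    apply hef
    rcases he with rfl | rfl | rfl | ⟨q, h, h', rfl⟩ | ⟨q, h, h', rfl⟩ <;>
    rcases hf with rfl | rfl | rfl | ⟨r, k, k', rfl⟩ | ⟨r, k, k', rfl⟩ <;>
    simp only [mem_rung, mem_leftB, mem_leftD, mem_rightB, mem_rightD] at hve hvf <;>
    rcases hve with rfl | rfl <;>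
    simp only [Wv_inj, Bv_inj, Wv_ne_Bv, Bv_ne_Wv, or_false, false_or] at hvf <;>
    first
      | rfl
      | (exfalso; omega)
      | (congr 1; omega)
  · intro v hv
    obtain ⟨e, he, hv⟩ := (mem_support_iff n v).1 hv
    have hW1 : ∀ q, 1 ≤ q → q ≤ n → ∃ e ∈ secondMatching n, Wv 1 q ∈ e := by
      intro q h h'
      obtain rfl | hq : q = 1 ∨ 2 ≤ q := by omega
      · exact ⟨leftB 0, by simp [secondMatching], by simp [mem_leftB]⟩
      · exact ⟨leftD q, Or.inr (Or.inr (Or.inr (Or.inl ⟨q, hq, h', rfl⟩))), by simp [mem_leftD]⟩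
    have hB1 : ∀ q, 0 ≤ q → q ≤ n → ∃ e ∈ secondMatching n, Bv 1 q ∈ e := by
      intro q h h'
      obtain rfl | rfl | hq : q = 0 ∨ q = 1 ∨ 2 ≤ q := by omega
      · exact ⟨leftB 0, by simp [secondMatching], by simp [mem_leftB]⟩
      · exact ⟨rung 1, by simp [secondMatching], by simp [mem_rung]⟩
      · exact ⟨leftD q, Or.inr (Or.inr (Or.inr (Or.inl ⟨q, hq, h', rfl⟩))), by simp [mem_leftD]⟩
    have hW2 : ∀ q, 0 ≤ q → q ≤ n → ∃ e ∈ secondMatching n, Wv 2 q ∈ e := by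
      intro q h h'
      obtain rfl | rfl | hq : q = 0 ∨ q = 1 ∨ 2 ≤ q := by omega
      · exact ⟨rightD 0, by simp [secondMatching], by simp [mem_rightD]⟩
      · exact ⟨rung 1, by simp [secondMatching], by simp [mem_rung]⟩
      · exact ⟨rightB (q - 1), Or.inr (Or.inr (Or.inr (Or.inr ⟨q - 1, by omega, by omega, rfl⟩))),
          by simp [mem_rightB]⟩
    have hB2 : ∀ q, 0 ≤ q → q < n → ∃ e ∈ secondMatching n, Bv 2 q ∈ e := by
      intro q h h'
      obtain rfl | hq : q = 0 ∨ 1 ≤ q := by omega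
      · exact ⟨rightD 0, by simp [secondMatching], by simp [mem_rightD]⟩
      · exact ⟨rightB q, Or.inr (Or.inr (Or.inr (Or.inr ⟨q, hq, h', rfl⟩))), by simp [mem_rightB]⟩
    rcases (mem_honeyEdges_one n e).1 he with
      ⟨q, h, h', rfl⟩ | ⟨q, h, h', rfl⟩ | ⟨q, h, h', rfl⟩ | ⟨q, h, h', rfl⟩ | ⟨q, h, h', rfl⟩ <;>
    simp only [mem_rung, mem_leftB, mem_leftD, mem_rightB, mem_rightD] at hv <;>
    rcases hv with rfl | rfl <;>
    first
      | exact hW1 _ (by omega) (by omega)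
      | exact hB1 _ (by omega) (by omega)
      | exact hW2 _ (by omega) (by omega)
      | exact hB2 _ (by omega) (by omega)

end Matchings

/-- For every integer `n ≥ 2`, the geometric realization of the perfect matching
complex of the honeycomb graph `H_{1×1×n}` (a line of `n` hexagons) is contractible. -/
theorem perfectMatchingComplex_H1xn_contractible (n : ℤ) (hn : 2 ≤ n) :
    ContractibleSpace (GeomRealization (pmFaces (honeyGraph 1 n))) := by
  exact contractible_of_two_vertices {M | IsPerfectMatchingSet (honeyGraph 1 n) M}
    (bottomMatching n) (rightB (n - 1)) (leftB 0)
    (fun M hM z hz hzP => by_contra fun h => disjoint_bottomMatching hn hM h z hz hzP)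
    (fun M hM z hz hzP => by_contra fun h => hzP (subset_bottomMatching hn hM h z hz))
    ⟨secondMatching n, secondMatching_isPerfect hn,
      Or.inr (Or.inr (Or.inr (Or.inr ⟨n - 1, by omega, by omega, rfl⟩))), Or.inr (Or.inl rfl)⟩
end

section
/- Let m,n ≥ 2 be integers. In the honeycomb graph H_{1×m×n}, the intersection of the perfect matching P(0,…,0) and the perfect matching P(n,…,n) is exactly the set of significant edges {d_{i,j} : 1 ≤ i ≤ m−1, 1 ≤ j ≤ n−1}. -/
/-! The edges `a_{i,j}`, `b_{i,j}`, `d_{i,j}` are pairwise distinct: each has one white and one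
black endpoint, the offset of the black one from the white one determines the family, and the white
one determines `(i, j)` (`edgeA_inj` through `edgeB_ne_edgeD`).  So the two matchings can be
intersected family by family.  By definition, `P(0,…,0)` consists of the `a_{i,0}`, the `b_{0,j}`
and the `d_{i,j}` with `i, j ≥ 1`, and `P(n,…,n)` of the `a_{i,n}`, the `b_{m,j}` and the `d_{i,j}`
with `i ≤ m - 1`, `j ≤ n - 1`.  As `0 ≠ n` and `0 ≠ m`, no `a` or `b` edge is shared, and the
common `d` edges are the significant ones. -/

open Finset

/-- `h` encodes a weakly decreasing sequence `(h 1, …, h m)` of integers with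
`n ≥ h 1 ≥ ⋯ ≥ h m ≥ 0` (a plane partition of shape `1 × m` with entries at most `n`),
extended by the conventions `h i = n` for `i ≤ 0` (in particular `h 0 = n`) and
`h i = 0` for `i > m` (in particular `h (m+1) = 0`). -/
def IsPP (m n : ℤ) (h : ℤ → ℤ) : Prop :=
  (∀ i : ℤ, i ≤ 0 → h i = n) ∧ (∀ i : ℤ, m < i → h i = 0) ∧
    (∀ i j : ℤ, i ≤ j → h j ≤ h i)

/-- The set of edges `P(h)` of the honeycomb graph `H_{1×m×n}` associated to the
weakly decreasing sequence `h`: all `a_{i,j}` with `j = h i`, all `b_{i,j}` with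
`h (i+1) < j ≤ h i`, and all `d_{i,j}` with `j > h i` or `j < h (i+1)` (indices
ranging over the valid index ranges of the honeycomb graph). -/
def Pmatch (m n : ℤ) (h : ℤ → ℤ) : Set (Sym2 HoneyV) :=
  {e | (∃ i : ℤ, 1 ≤ i ∧ i ≤ m ∧ e = edgeA n i (h i)) ∨
       (∃ i j : ℤ, 0 ≤ i ∧ i ≤ m ∧ 1 ≤ j ∧ j ≤ n ∧ h (i+1) < j ∧ j ≤ h i ∧
          e = edgeB n i j) ∨
       (∃ i j : ℤ, 0 ≤ i ∧ i ≤ m ∧ 0 ≤ j ∧ j ≤ n ∧ ¬(i = 0 ∧ j = n) ∧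
          ¬(i = m ∧ j = 0) ∧ (h i < j ∨ j < h (i+1)) ∧ e = edgeD n i j)}

lemma edgeA_inj {n i j k l : ℤ} : edgeA n i j = edgeA n k l ↔ i = k ∧ j = l := by
  simp only [edgeA, Wv, Bv, Sym2.eq_iff, Sum.inl.injEq, Sum.inr.injEq, Prod.mk.injEq, reduceCtorEq,
    false_and, or_false]
  omega

lemma edgeB_inj {n i j k l : ℤ} : edgeB n i j = edgeB n k l ↔ i = k ∧ j = l := by
  simp only [edgeB, Wv, Bv, Sym2.eq_iff, Sum.inl.injEq, Sum.inr.injEq, Prod.mk.injEq, reduceCtorEq,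
    false_and, or_false]
  omega

lemma edgeD_inj {n i j k l : ℤ} : edgeD n i j = edgeD n k l ↔ i = k ∧ j = l := by
  simp only [edgeD, Wv, Bv, Sym2.eq_iff, Sum.inl.injEq, Sum.inr.injEq, Prod.mk.injEq, reduceCtorEq,
    false_and, or_false]
  omega

lemma edgeA_ne_edgeB (n i j k l : ℤ) : edgeA n i j ≠ edgeB n k l := by
  simp only [edgeA, edgeB, Wv, Bv, ne_eq, Sym2.eq_iff, Sum.inl.injEq, Sum.inr.injEq,
    Prod.mk.injEq, reduceCtorEq, false_and, or_false]
  omega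

lemma edgeA_ne_edgeD (n i j k l : ℤ) : edgeA n i j ≠ edgeD n k l := by
  simp only [edgeA, edgeD, Wv, Bv, ne_eq, Sym2.eq_iff, Sum.inl.injEq, Sum.inr.injEq,
    Prod.mk.injEq, reduceCtorEq, false_and, or_false]
  omega

lemma edgeB_ne_edgeD (n i j k l : ℤ) : edgeB n i j ≠ edgeD n k l := by
  simp only [edgeB, edgeD, Wv, Bv, ne_eq, Sym2.eq_iff, Sum.inl.injEq, Sum.inr.injEq,
    Prod.mk.injEq, reduceCtorEq, false_and, or_false]
  omega

/-- Let `m, n ≥ 2`.  The intersection of the perfect matching `P(0,…,0)` and the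
perfect matching `P(n,…,n)` of the honeycomb graph `H_{1×m×n}` is exactly the set of
significant edges `{d_{i,j} : 1 ≤ i ≤ m-1, 1 ≤ j ≤ n-1}`. -/
theorem inter_P0_Pn_eq_significantEdges (m n : ℤ) (hm : 2 ≤ m) (hn : 2 ≤ n) :
    Pmatch m n (fun i => if i ≤ 0 then n else 0) ∩
        Pmatch m n (fun i => if i ≤ m then n else 0) =
      {e | ∃ i j : ℤ, 1 ≤ i ∧ i ≤ m - 1 ∧ 1 ≤ j ∧ j ≤ n - 1 ∧ e = edgeD n i j} := by
  ext e
  constructor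
  · rintro ⟨⟨i, hi⟩ | ⟨i, j, hi⟩ | ⟨i, j, hi⟩, ⟨k, hk⟩ | ⟨k, l, hk⟩ | ⟨k, l, hk⟩⟩
    · obtain ⟨h₁, h₂, rfl⟩ := hi
      obtain ⟨h₃, h₄, h⟩ := hk
      obtain ⟨rfl, h⟩ := edgeA_inj.1 h
      dsimp only at h
      split_ifs at h <;> omega
    · obtain ⟨_, _, rfl⟩ := hi
      exact absurd hk.2.2.2.2.2.2 (edgeA_ne_edgeB _ _ _ _ _)
    · obtain ⟨_, _, rfl⟩ := hi
      exact absurd hk.2.2.2.2.2.2.2 (edgeA_ne_edgeD _ _ _ _ _)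
    · obtain ⟨_, _, rfl⟩ := hk
      exact absurd hi.2.2.2.2.2.2 (edgeA_ne_edgeB _ _ _ _ _)
    · obtain ⟨_, _, _, _, _, h₁, rfl⟩ := hi
      obtain ⟨_, _, _, _, h₂, _, h⟩ := hk
      obtain ⟨rfl, rfl⟩ := edgeB_inj.1 h
      -- the upper bound on `j` in `P(0,…,0)` forces `i ≤ 0`, the lower one in `P(n,…,n)` `m ≤ i`
      dsimp only at h₁ h₂
      split_ifs at h₁ h₂ <;> omega
    · obtain ⟨_, _, _, _, _, _, rfl⟩ := hi
      exact absurd hk.2.2.2.2.2.2.2 (edgeB_ne_edgeD _ _ _ _ _)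
    · obtain ⟨_, _, rfl⟩ := hk
      exact absurd hi.2.2.2.2.2.2.2 (edgeA_ne_edgeD _ _ _ _ _)
    · obtain ⟨_, _, _, _, _, _, rfl⟩ := hk
      exact absurd hi.2.2.2.2.2.2.2 (edgeB_ne_edgeD _ _ _ _ _)
    · obtain ⟨_, _, _, _, _, _, h₁, rfl⟩ := hi
      obtain ⟨_, _, _, _, _, _, h₂, h⟩ := hk
      obtain ⟨rfl, rfl⟩ := edgeD_inj.1 h
      refine ⟨i, j, ?_, ?_, ?_, ?_, rfl⟩ <;> dsimp only at h₁ h₂ <;>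
        split_ifs at h₁ h₂ <;> omega
  · rintro ⟨i, j, hi, him, hj, hjn, rfl⟩
    constructor
    · refine Or.inr (Or.inr ⟨i, j, ?_, ?_, ?_, ?_, ?_, ?_, Or.inl ?_, rfl⟩) <;> try omega
      dsimp only
      rw [if_neg (by omega)]
      omega
    · refine Or.inr (Or.inr ⟨i, j, ?_, ?_, ?_, ?_, ?_, ?_, Or.inr ?_, rfl⟩) <;> try omega
      dsimp only
      rw [if_pos (by omega)]
      omega
end

section
/- Let n ≥ 2 be an integer and let S be a subset of the set of significant edges {d_{1,1}, …, d_{1,n−1}} of the honeycomb graph H_{1×2×n}. Then S ∪ {d_{0,0}, d_{2,n}} is contained in some perfect matching of H_{1×2×n} if and only if S is a proper subset of {d_{1,1}, …, d_{1,n−1}}. -/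
/-!
Put `q = n - j`, so that the `d`-edge `d_{i,j}` joins `Wv (i+1) q` to `Bv (i+1) q`. The significant
edges of `H_{1×2×n}` join `Wv 2 q` to `Bv 2 q` for `1 ≤ q ≤ n - 1`.

If a perfect matching contained all of them together with `d_{2,n} = Wv 3 0 — Bv 3 0`, then
`Bv 2 0` could only be matched to `Wv 2 0`, so every `Wv 2 q` with `0 ≤ q ≤ n - 1` would be matched
to `Bv 2 q`. By induction on `q`, the vertex `Bv 1 q` is then forced to be matched to
`Wv 1 (q+1)`. At `q = n - 1` this uses `Wv 1 n`, contradicting `d_{0,0} = Wv 1 n — Bv 1 n`.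

Conversely, for each `1 ≤ r ≤ n - 1` there is a perfect matching `pivotMatching n r` which contains
`d_{0,0}`, `d_{2,n}` and all significant edges except the one at height `q = r`. It matches
`Bv 1 r` to `Wv 2 r` and `Bv 2 r` to `Wv 3 r`, and the rest of each column is then determined.
-/

open Finset

/-- `HoneyAdj n p q p' q'` says that `Wv p q` and `Bv p' q'` are joined by an edge of
`H_{1×2×n}`; the three cases are the `a`-, `b`- and `d`-edges. -/
def HoneyAdj (n p q p' q' : ℤ) : Prop :=
  (2 ≤ p ∧ p ≤ 3 ∧ p' = p - 1 ∧ 0 ≤ q ∧ q ≤ n ∧ q' = q) ∨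
  (1 ≤ p ∧ p ≤ 3 ∧ p' = p ∧ 1 ≤ q ∧ q ≤ n ∧ q' = q - 1) ∨
  (1 ≤ p ∧ p ≤ 3 ∧ p' = p ∧ 0 ≤ q ∧ q ≤ n ∧ q' = q ∧ ¬(p = 1 ∧ q = 0) ∧ ¬(p = 3 ∧ q = n))

lemma edge_inj {p q p' q' a b a' b' : ℤ} :
    s(Wv p q, Bv p' q') = s(Wv a b, Bv a' b') ↔ p = a ∧ q = b ∧ p' = a' ∧ q' = b' := by
  simp [Wv, Bv, and_assoc]

lemma mem_honeyEdges_iff (n : ℤ) (e : Sym2 HoneyV) :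
    e ∈ honeyEdges 2 n ↔ ∃ p q p' q', HoneyAdj n p q p' q' ∧ e = s(Wv p q, Bv p' q') := by
  constructor
  · rintro (⟨i, j, h1, h2, h3, h4, rfl⟩ | ⟨i, j, h1, h2, h3, h4, rfl⟩ |
      ⟨i, j, h1, h2, h3, h4, h5, h6, rfl⟩)
    · exact ⟨_, _, _, _, by unfold HoneyAdj; omega, rfl⟩
    · exact ⟨_, _, _, _, by unfold HoneyAdj; omega, rfl⟩
    · exact ⟨_, _, _, _, by unfold HoneyAdj; omega, rfl⟩
  · rintro ⟨p, q, p', q', h, rfl⟩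
    rcases h with ⟨h1, h2, rfl, h3, h4, rfl⟩ | ⟨h1, h2, rfl, h3, h4, rfl⟩ |
      ⟨h1, h2, rfl, h3, h4, rfl, h5, h6⟩
    · refine Or.inl ⟨p - 1, n - q', by omega, by omega, by omega, by omega, ?_⟩
      rw [edgeA, edge_inj]; omega
    · refine Or.inr (Or.inl ⟨p' - 1, n - q + 1, by omega, by omega, by omega, by omega, ?_⟩)
      rw [edgeB, edge_inj]; omega
    · refine Or.inr (Or.inr ⟨p' - 1, n - q', by omega, by omega, by omega, by omega,
        by omega, by omega, ?_⟩)
      rw [edgeD, edge_inj]; omega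

lemma mem_edgeSet_honeyGraph_iff (n : ℤ) (e : Sym2 HoneyV) :
    e ∈ (honeyGraph 2 n).edgeSet ↔
      ∃ p q p' q', HoneyAdj n p q p' q' ∧ e = s(Wv p q, Bv p' q') := by
  rw [← mem_honeyEdges_iff, honeyGraph, SimpleGraph.edgeSet_fromEdgeSet, Set.mem_sdiff]
  constructor
  · exact fun h => h.1
  · intro h
    refine ⟨h, ?_⟩
    obtain ⟨p, q, p', q', -, rfl⟩ := (mem_honeyEdges_iff n e).1 h
    simp [Wv, Bv]

/-- A vertex shared by two white-black edges is either their white or their black endpoint. -/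
lemma mem_edge_both {p q p' q' a b a' b' : ℤ} {v : HoneyV}
    (h1 : v ∈ s(Wv p q, Bv p' q')) (h2 : v ∈ s(Wv a b, Bv a' b')) :
    (p = a ∧ q = b) ∨ (p' = a' ∧ q' = b') := by
  rw [Sym2.mem_iff] at h1 h2
  rcases h1 with rfl | rfl
  · exact Or.inl (by simpa [Wv, Bv] using h2)
  · exact Or.inr (by simpa [Wv, Bv] using h2)

/-- `PivotPair n r p q p' q'` says that `Wv p q` is matched to `Bv p' q'` in the perfect matching
with pivot height `r`. -/
def PivotPair (n r p q p' q' : ℤ) : Prop :=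
  (p = 1 ∧ p' = 1 ∧ 1 ≤ q ∧ q ≤ r ∧ q' = q - 1) ∨
  (p = 1 ∧ p' = 1 ∧ r < q ∧ q ≤ n ∧ q' = q) ∨
  (p = 2 ∧ p' = 1 ∧ q = r ∧ q' = r) ∨
  (p = 2 ∧ p' = 2 ∧ 0 ≤ q ∧ q ≤ n ∧ q ≠ r ∧ q' = q) ∨
  (p = 3 ∧ p' = 2 ∧ q = r ∧ q' = r) ∨
  (p = 3 ∧ p' = 3 ∧ 0 ≤ q ∧ q < r ∧ q' = q) ∨
  (p = 3 ∧ p' = 3 ∧ r < q ∧ q ≤ n ∧ q' = q - 1)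

/-- The perfect matching containing every `d_{1,j}` except the one at height `n - j = r`. -/
def pivotMatching (n r : ℤ) : Set (Sym2 HoneyV) :=
  {e | ∃ p q p' q', PivotPair n r p q p' q' ∧ e = s(Wv p q, Bv p' q')}

lemma exists_pivotPair_white {n r p q p' q' : ℤ} (hr : 1 ≤ r) (hrn : r ≤ n - 1)
    (h : HoneyAdj n p q p' q') : ∃ a b, PivotPair n r p q a b := by
  have hp : (p = 1 ∧ 1 ≤ q ∧ q ≤ n) ∨ (p = 2 ∧ 0 ≤ q ∧ q ≤ n) ∨ (p = 3 ∧ 0 ≤ q ∧ q ≤ n) := by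
    unfold HoneyAdj at h; omega
  clear h
  rcases hp with ⟨rfl, h0, hn⟩ | ⟨rfl, h0, hn⟩ | ⟨rfl, h0, hn⟩
  · rcases le_or_gt q r with hq | hq
    · exact ⟨1, q - 1, by simp [PivotPair]; omega⟩
    · exact ⟨1, q, by simp [PivotPair]; omega⟩
  · rcases eq_or_ne q r with hq | hq
    · exact ⟨1, q, by simp [PivotPair]; omega⟩
    · exact ⟨2, q, by simp [PivotPair]; omega⟩
  · rcases lt_trichotomy q r with hq | hq | hq
    · exact ⟨3, q, by simp [PivotPair]; omega⟩
    · exact ⟨2, q, by simp [PivotPair]; omega⟩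
    · exact ⟨3, q - 1, by simp [PivotPair]; omega⟩

lemma exists_pivotPair_black {n r p q p' q' : ℤ} (hr : 1 ≤ r) (hrn : r ≤ n - 1)
    (h : HoneyAdj n p q p' q') : ∃ a b, PivotPair n r a b p' q' := by
  have hp : (p' = 1 ∧ 0 ≤ q' ∧ q' ≤ n) ∨ (p' = 2 ∧ 0 ≤ q' ∧ q' ≤ n) ∨
      (p' = 3 ∧ 0 ≤ q' ∧ q' ≤ n - 1) := by
    unfold HoneyAdj at h; omega
  clear h
  rcases hp with ⟨rfl, h0, hn⟩ | ⟨rfl, h0, hn⟩ | ⟨rfl, h0, hn⟩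
  · rcases lt_trichotomy q' r with hq | hq | hq
    · exact ⟨1, q' + 1, by simp [PivotPair]; omega⟩
    · exact ⟨2, q', by simp [PivotPair]; omega⟩
    · exact ⟨1, q', by simp [PivotPair]; omega⟩
  · rcases eq_or_ne q' r with hq | hq
    · exact ⟨3, q', by simp [PivotPair]; omega⟩
    · exact ⟨2, q', by simp [PivotPair]; omega⟩
  · rcases lt_or_ge q' r with hq | hq
    · exact ⟨3, q', by simp [PivotPair]; omega⟩
    · exact ⟨3, q' + 1, by simp [PivotPair]; omega⟩

lemma isPerfectMatchingSet_pivotMatching {n r : ℤ} (hr : 1 ≤ r) (hrn : r ≤ n - 1) :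
    IsPerfectMatchingSet (honeyGraph 2 n) (pivotMatching n r) := by
  refine ⟨⟨?_, ?_⟩, ?_⟩
  · rintro e ⟨p, q, p', q', h, rfl⟩
    rw [mem_edgeSet_honeyGraph_iff]
    refine ⟨p, q, p', q', ?_, rfl⟩
    unfold PivotPair at h; unfold HoneyAdj; omega
  · rintro e ⟨p, q, p', q', h, rfl⟩ f ⟨a, b, a', b', h', rfl⟩ hne v hv hv'
    apply hne
    rw [edge_inj]
    have := mem_edge_both hv hv'
    unfold PivotPair at h h'
    omega
  · intro v hv
    obtain ⟨w, hw⟩ := hv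
    replace hw : s(v, w) ∈ (honeyGraph 2 n).edgeSet := hw
    rw [mem_edgeSet_honeyGraph_iff] at hw
    obtain ⟨p, q, p', q', h, he⟩ := hw
    have hv : v ∈ s(Wv p q, Bv p' q') := he ▸ Sym2.mem_mk_left v w
    rcases Sym2.mem_iff.1 hv with rfl | rfl
    · obtain ⟨a, b, hab⟩ := exists_pivotPair_white hr hrn h
      exact ⟨_, ⟨_, _, _, _, hab, rfl⟩, Sym2.mem_mk_left _ _⟩
    · obtain ⟨a, b, hab⟩ := exists_pivotPair_black hr hrn h
      exact ⟨_, ⟨_, _, _, _, hab, rfl⟩, Sym2.mem_mk_right _ _⟩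

/-- In a perfect matching, a non-isolated black vertex is matched along some edge of the graph, and
the white endpoint of that edge lies on no other matching edge. -/
lemma exists_white_of_black {n : ℤ} {M : Set (Sym2 HoneyV)}
    (hM : IsPerfectMatchingSet (honeyGraph 2 n) M) {p q p' q' : ℤ} (h : HoneyAdj n p q p' q') :
    ∃ a b, HoneyAdj n a b p' q' ∧ s(Wv a b, Bv p' q') ∈ M ∧
      ∀ c d, s(Wv a b, Bv c d) ∈ M → c = p' ∧ d = q' := by
  have hsupp : Bv p' q' ∈ (honeyGraph 2 n).support := by
    refine ⟨Wv p q, ?_⟩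
    change s(Bv p' q', Wv p q) ∈ (honeyGraph 2 n).edgeSet
    rw [mem_edgeSet_honeyGraph_iff]
    exact ⟨p, q, p', q', h, Sym2.eq_swap⟩
  obtain ⟨e, heM, hve⟩ := hM.2 _ hsupp
  obtain ⟨a, b, a', b', hadj, rfl⟩ := (mem_edgeSet_honeyGraph_iff n e).1 (hM.1.1 heM)
  have hab : p' = a' ∧ q' = b' := by
    rcases Sym2.mem_iff.1 hve with h | h <;> simpa [Wv, Bv] using h
  obtain ⟨rfl, rfl⟩ := hab
  refine ⟨a, b, hadj, heM, fun c d hcd => ?_⟩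
  by_contra hne
  refine hM.1.2 _ heM _ hcd (fun heq => hne ?_) (Wv a b) (Sym2.mem_mk_left _ _)
    (Sym2.mem_mk_left _ _)
  obtain ⟨-, -, h1, h2⟩ := edge_inj.1 heq
  exact ⟨h1.symm, h2.symm⟩

/-- The edges `d_{0,0}`, `d_{2,n}` and all significant edges never lie in a common perfect
matching. -/
lemma not_all_significant {n : ℤ} (hn : 2 ≤ n) {M : Set (Sym2 HoneyV)}
    (hM : IsPerfectMatchingSet (honeyGraph 2 n) M)
    (h1 : s(Wv 1 n, Bv 1 n) ∈ M) (h3 : s(Wv 3 0, Bv 3 0) ∈ M)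
    (h2 : ∀ q, 1 ≤ q → q ≤ n - 1 → s(Wv 2 q, Bv 2 q) ∈ M) : False := by
  have h20 : s(Wv 2 0, Bv 2 0) ∈ M := by
    obtain ⟨a, b, hadj, hab, hu⟩ := exists_white_of_black hM
      (show HoneyAdj n 2 0 2 0 by unfold HoneyAdj; omega)
    have hcase : (a = 2 ∧ b = 0) ∨ (a = 2 ∧ b = 1) ∨ (a = 3 ∧ b = 0) := by
      unfold HoneyAdj at hadj; omega
    rcases hcase with ⟨rfl, rfl⟩ | ⟨rfl, rfl⟩ | ⟨rfl, rfl⟩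
    · exact hab
    · have := hu _ _ (h2 1 (by omega) (by omega)); omega
    · have := hu _ _ h3; omega
  have h2' : ∀ q, 0 ≤ q → q ≤ n - 1 → s(Wv 2 q, Bv 2 q) ∈ M := by
    intro q hq hqn
    rcases hq.eq_or_lt with rfl | hq
    · exact h20
    · exact h2 q hq hqn
  have key : ∀ k : ℕ, (k : ℤ) ≤ n - 1 → s(Wv 1 ((k : ℤ) + 1), Bv 1 (k : ℤ)) ∈ M := by
    intro k
    induction k with
    | zero =>
      intro _
      obtain ⟨a, b, hadj, hab, hu⟩ := exists_white_of_black hM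
        (show HoneyAdj n 2 0 1 0 by unfold HoneyAdj; omega)
      have hcase : (a = 1 ∧ b = 1) ∨ (a = 2 ∧ b = 0) := by
        unfold HoneyAdj at hadj; omega
      rcases hcase with ⟨rfl, rfl⟩ | ⟨rfl, rfl⟩
      · simpa using hab
      · have := hu _ _ h20; omega
    | succ k ih =>
      intro hk
      push_cast at hk ⊢
      have ih' := ih (by omega)
      obtain ⟨a, b, hadj, hab, hu⟩ := exists_white_of_black hM
        (show HoneyAdj n 2 (k + 1) 1 (k + 1) by unfold HoneyAdj; omega)
      have hcase : (a = 1 ∧ b = k + 1 + 1) ∨ (a = 2 ∧ b = k + 1) ∨ (a = 1 ∧ b = k + 1) := by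
        unfold HoneyAdj at hadj; omega
      rcases hcase with ⟨rfl, rfl⟩ | ⟨rfl, rfl⟩ | ⟨rfl, rfl⟩
      · exact hab
      · have := hu _ _ (h2' (k + 1) (by omega) (by omega)); omega
      · have := hu _ _ ih'; omega
  have hlast := key (n - 1).toNat (by omega)
  rw [Int.toNat_of_nonneg (by omega), sub_add_cancel] at hlast
  have := hM.1.2 _ h1 _ hlast (fun heq => by have := edge_inj.1 heq; omega) (Wv 1 n)
    (Sym2.mem_mk_left _ _)
  exact this (Sym2.mem_mk_left _ _)

/-- Let `n ≥ 2` and let `S` be a subset of the set of significant edges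
`{d_{1,1}, …, d_{1,n-1}}` of the honeycomb graph `H_{1×2×n}`.  Then
`S ∪ {d_{0,0}, d_{2,n}}` is contained in some perfect matching of `H_{1×2×n}` if and
only if `S` is a proper subset of `{d_{1,1}, …, d_{1,n-1}}`. -/
theorem H2xn_significant_union_extends_iff_ssubset (n : ℤ) (hn : 2 ≤ n)
    (S : Set (Sym2 HoneyV))
    (hS : S ⊆ {e | ∃ j : ℤ, 1 ≤ j ∧ j ≤ n - 1 ∧ e = edgeD n 1 j}) :
    (∃ M : Set (Sym2 HoneyV), IsPerfectMatchingSet (honeyGraph 2 n) M ∧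
        S ∪ {edgeD n 0 0, edgeD n 2 n} ⊆ M) ↔
      S ⊂ {e | ∃ j : ℤ, 1 ≤ j ∧ j ≤ n - 1 ∧ e = edgeD n 1 j} := by
  have e00 : edgeD n 0 0 = s(Wv 1 n, Bv 1 n) := by simp [edgeD]
  have e2n : edgeD n 2 n = s(Wv 3 0, Bv 3 0) := by simp [edgeD]
  constructor
  · rintro ⟨M, hM, hSM⟩
    refine hS.ssubset_of_ne ?_
    rintro rfl
    refine not_all_significant hn hM (e00 ▸ hSM (by simp)) (e2n ▸ hSM (by simp)) ?_
    intro q hq hqn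
    refine hSM (Or.inl ⟨n - q, by omega, by omega, ?_⟩)
    simp [edgeD]
  · intro hss
    obtain ⟨e, ⟨j, hj1, hjn, rfl⟩, hjS⟩ := Set.exists_of_ssubset hss
    refine ⟨pivotMatching n (n - j),
      isPerfectMatchingSet_pivotMatching (by omega) (by omega), ?_⟩
    rintro f (hf | rfl | rfl)
    · obtain ⟨k, hk1, hkn, rfl⟩ := hS hf
      have hkj : k ≠ j := by rintro rfl; exact hjS hf
      exact ⟨_, _, _, _, by unfold PivotPair; omega, rfl⟩
    · exact ⟨_, _, _, _, by unfold PivotPair; omega, e00⟩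
    · exact ⟨_, _, _, _, by unfold PivotPair; omega, e2n⟩
end
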